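/- arXiv:2501.14639 — 2 statements merged into one kernel-verified Lean document; each statement's English description precedes it below -/
import Mathlib

section
/- Let n ≥ 2 and let Ω ⊂ ℝ^n be an open, bounded, (η, r₀)-Reifenberg flat set with 0 < η < 1/4. Then for every x ∈ ∂Ω and every 0 < r < r₀ there exists a unit vector ν ∈ ℝ^n such that the closed ball of radius r/8 centered at x + (1/8 + η) r ν is contained in ℝ^n \ Ω; moreover the distance from x to this closed ball equals η r. -/
open Metric Set RealInnerProductSpace

/-- `Ω ⊆ ℝⁿ` is `(η, r₀)`-Reifenberg flat: for every boundary point `x` and scale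
`0 < r < r₀` there is a hyperplane through `x` (given by a unit normal `ν`) that
approximates `∂Ω` in `B_r(x)` up to Hausdorff distance `η r`, and the two connected
components of `{y ∈ B_r(x) : dist(y, H) ≥ 2ηr}` lie in `Ω` and `Ωᶜ` respectively. -/
def ReifenbergFlat {n : ℕ} (Ω : Set (EuclideanSpace ℝ (Fin n))) (η r₀ : ℝ) : Prop :=
  ∀ x ∈ frontier Ω, ∀ r : ℝ, 0 < r → r < r₀ →
    ∃ ν : EuclideanSpace ℝ (Fin n), ‖ν‖ = 1 ∧
      Metric.hausdorffDist (frontier Ω ∩ ball x r)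
        ({y | ⟪y - x, ν⟫ = 0} ∩ ball x r) ≤ η * r ∧
      {y | y ∈ ball x r ∧ 2 * η * r ≤ ⟪y - x, ν⟫} ⊆ Ω ∧
      {y | y ∈ ball x r ∧ ⟪y - x, ν⟫ ≤ -(2 * η * r)} ⊆ Ωᶜ

theorem exterior_ball_condition (n : ℕ) (hn : 2 ≤ n)
    (Ω : Set (EuclideanSpace ℝ (Fin n))) (hΩo : IsOpen Ω)
    (hΩb : Bornology.IsBounded Ω) (η r₀ : ℝ) (hη0 : 0 < η) (hη : η < 1/4)
    (hr₀ : 0 < r₀) (hRF : ReifenbergFlat Ω η r₀) :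
    ∀ x ∈ frontier Ω, ∀ r : ℝ, 0 < r → r < r₀ →
      ∃ ν : EuclideanSpace ℝ (Fin n), ‖ν‖ = 1 ∧
        closedBall (x + ((1/8 + η) * r) • ν) (r/8) ⊆ Ωᶜ ∧
        Metric.infDist x (closedBall (x + ((1/8 + η) * r) • ν) (r/8)) = η * r := by
  intro x hx r hr hrr
  obtain ⟨ν, hν, hH, -, hext⟩ := hRF x hx r hr hrr
  have hηr : 0 < η * r := mul_pos hη0 hr
  have hηr4 : η * r < r / 4 := by nlinarith
  have hxH : x ∈ ({y | ⟪y - x, ν⟫ = 0} ∩ ball x r : Set (EuclideanSpace ℝ (Fin n))) :=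
    ⟨by simp, mem_ball_self hr⟩
  have hfin : Metric.hausdorffEDist (frontier Ω ∩ ball x r)
      ({y | ⟪y - x, ν⟫ = 0} ∩ ball x r) ≠ ⊤ :=
    Metric.hausdorffEDist_ne_top_of_nonempty_of_bounded ⟨x, hx, mem_ball_self hr⟩ ⟨x, hxH⟩
      (isBounded_ball.subset inter_subset_right) (isBounded_ball.subset inter_subset_right)
  have hfr : ∀ y ∈ frontier Ω, y ∈ ball x r → -(η * r) ≤ ⟪y - x, ν⟫ := by
    intro y hy hyb
    have h1 := Metric.infDist_le_hausdorffDist_of_mem (x := y) (s := frontier Ω ∩ ball x r)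
      ⟨hy, hyb⟩ hfin
    have h2 : -⟪y - x, ν⟫ ≤ infDist y ({y | ⟪y - x, ν⟫ = 0} ∩ ball x r) := by
      refine (le_infDist ⟨x, hxH⟩).2 ?_
      rintro z ⟨hz, -⟩
      have h3 : ⟪y - x, ν⟫ = ⟪y - z, ν⟫ := by
        have : y - x = (y - z) + (z - x) := by abel
        rw [this, inner_add_left, show ⟪z - x, ν⟫ = 0 from hz, add_zero]
      have h4 := abs_real_inner_le_norm (y - z) ν
      rw [hν, mul_one, ← dist_eq_norm] at h4
      rw [h3]
      exact (neg_le_abs _).trans h4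
    linarith
  have hνν : ⟪ν, ν⟫ = 1 := by rw [real_inner_self_eq_norm_sq, hν]; norm_num
  let S : Set (EuclideanSpace ℝ (Fin n)) := ball x r ∩ {y | ⟪y - x, ν⟫ < -(η * r)}
  have hSconv : Convex ℝ S := by
    refine (convex_ball x r).inter ?_
    have : {y : EuclideanSpace ℝ (Fin n) | ⟪y - x, ν⟫ < -(η * r)}
        = {y | innerₛₗ ℝ ν y < -(η * r) + ⟪x, ν⟫} := by
      ext y
      simp only [mem_ofPred_eq, inner_sub_left, innerₛₗ_apply_apply, real_inner_comm y ν]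
      rw [sub_lt_iff_lt_add]
    rw [this]
    exact convex_halfSpace_lt (innerₛₗ ℝ ν).isLinear _
  have hSsub : S ⊆ Ωᶜ := by
    intro y hy hyΩ
    have hp : x + (-(2 * η * r)) • ν ∈ S ∩ Ωᶜ := by
      have hb : x + (-(2 * η * r)) • ν ∈ ball x r := by
        rw [mem_ball, dist_eq_norm, add_sub_cancel_left, norm_smul, hν, mul_one, Real.norm_eq_abs,
          abs_neg, abs_of_pos (by linarith)]
        linarith
      have hi : ⟪x + (-(2 * η * r)) • ν - x, ν⟫ = -(2 * η * r) := by
        rw [add_sub_cancel_left, real_inner_smul_left, hνν, mul_one]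
      refine ⟨⟨hb, ?_⟩, hext ⟨hb, hi.le⟩⟩
      show ⟪x + (-(2 * η * r)) • ν - x, ν⟫ < _
      rw [hi]; linarith
    have hSf : ∀ z ∈ S, z ∈ closure Ω → z ∈ Ω := by
      intro z hzS hzc
      by_contra hz
      have := hfr z (by rw [hΩo.frontier_eq]; exact ⟨hzc, hz⟩) hzS.1
      have h2 : ⟪z - x, ν⟫ < -(η * r) := hzS.2
      linarith
    obtain ⟨z, -, hz1, hz2⟩ := hSconv.isPreconnected Ω (closure Ω)ᶜ hΩo
      isClosed_closure.isOpen_compl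
      (fun z hz => (em (z ∈ closure Ω)).imp (hSf z hz) id) ⟨y, hy, hyΩ⟩
      ⟨_, hp.1, fun h => hp.2 (hSf _ hp.1 h)⟩
    exact hz2 (subset_closure hz1)
  have hc : dist (x + ((1/8 + η) * r) • (-ν)) x = (1/8 + η) * r := by
    rw [dist_eq_norm, add_sub_cancel_left, norm_smul, norm_neg, hν, mul_one, Real.norm_eq_abs,
      abs_of_pos (by positivity)]
  refine ⟨-ν, by rw [norm_neg, hν], ?_, ?_⟩
  · rw [← closure_ball _ (by positivity : r / 8 ≠ 0)]
    refine closure_minimal (Subset.trans ?_ hSsub) hΩo.isClosed_compl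
    intro y hy
    rw [mem_ball] at hy
    refine ⟨?_, ?_⟩
    · rw [mem_ball]
      have := dist_triangle y (x + ((1/8 + η) * r) • (-ν)) x
      linarith
    · show ⟪y - x, ν⟫ < -(η * r)
      have h1 : y - x = (y - (x + ((1/8 + η) * r) • (-ν))) + (-((1/8 + η) * r)) • ν := by
        rw [smul_neg, neg_smul]; abel
      have h4 := abs_real_inner_le_norm (y - (x + ((1/8 + η) * r) • (-ν))) ν
      rw [hν, mul_one, ← dist_eq_norm] at h4
      have h5 := (le_abs_self _).trans h4
      rw [h1, inner_add_left, real_inner_smul_left, hνν]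
      linarith
  · apply le_antisymm
    · have hm : x + (η * r) • (-ν) ∈ closedBall (x + ((1/8 + η) * r) • (-ν)) (r/8) := by
        rw [mem_closedBall, dist_eq_norm, add_sub_add_left_eq_sub, ← sub_smul, norm_smul, norm_neg,
          hν, mul_one, Real.norm_eq_abs, abs_le]
        constructor <;> linarith
      refine (infDist_le_dist_of_mem hm).trans (le_of_eq ?_)
      rw [dist_comm, dist_eq_norm, add_sub_cancel_left, norm_smul, norm_neg, hν, mul_one,
        Real.norm_eq_abs, abs_of_pos hηr]
    · refine (le_infDist ⟨_, mem_closedBall_self (by positivity)⟩).2 ?_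
      intro z hz
      rw [mem_closedBall] at hz
      have := dist_triangle_left (x + ((1/8 + η) * r) • (-ν)) x z
      rw [dist_comm z x] at this
      linarith
end

section
/- Let n ≥ 2 and let Ω ⊂ ℝ^n be an open, bounded, (η, r₀)-Reifenberg flat set with 0 < η < 1/4. Then for every x ∈ ∂Ω and every 0 < r < r₀ there exists a unit vector ν ∈ ℝ^n such that the open ball of radius r/8 centered at x + (1/8 + η) r ν is contained in Ω. -/
open Metric Set RealInnerProductSpace

theorem interior_ball_condition (n : ℕ) (hn : 2 ≤ n)
    (Ω : Set (EuclideanSpace ℝ (Fin n))) (hΩo : IsOpen Ω)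
    (hΩb : Bornology.IsBounded Ω) (η r₀ : ℝ) (hη0 : 0 < η) (hη : η < 1/4)
    (hr₀ : 0 < r₀) (hRF : ReifenbergFlat Ω η r₀) :
    ∀ x ∈ frontier Ω, ∀ r : ℝ, 0 < r → r < r₀ →
      ∃ ν : EuclideanSpace ℝ (Fin n), ‖ν‖ = 1 ∧
        ball (x + ((1/8 + η) * r) • ν) (r/8) ⊆ Ω := by
  intro x hx r hr hrr
  obtain ⟨ν, hν, hH, hin, hout⟩ := hRF x hx r hr hrr
  refine ⟨ν, hν, ?_⟩
  have hνν : ⟪ν, ν⟫ = 1 := by rw [real_inner_self_eq_norm_sq, hν]; norm_num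
  have hηr : η * r < r / 4 := by nlinarith
  have hηr0 : 0 < η * r := by positivity
  -- basic facts on points of the ball
  have hB : ∀ y ∈ ball (x + ((1/8 + η) * r) • ν) (r/8),
      y ∈ ball x r ∧ η * r < ⟪y - x, ν⟫ := by
    intro y hy
    rw [mem_ball, dist_eq_norm] at hy
    have e : y - x = (y - (x + ((1/8 + η) * r) • ν)) + ((1/8 + η) * r) • ν := by abel
    have hs : ‖((1/8 + η) * r) • ν‖ = (1/8 + η) * r := by
      rw [norm_smul, hν, mul_one, Real.norm_of_nonneg (by positivity)]
    constructor
    · rw [mem_ball, dist_eq_norm, e]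
      have := norm_add_le (y - (x + ((1/8 + η) * r) • ν)) (((1/8 + η) * r) • ν)
      rw [hs] at this
      linarith
    · rw [e, inner_add_left, real_inner_smul_left, hνν]
      have := abs_le.1 (abs_real_inner_le_norm (y - (x + ((1/8 + η) * r) • ν)) ν)
      rw [hν] at this
      linarith [this.1]
  have hxH : x ∈ ({y | ⟪y - x, ν⟫ = 0} ∩ ball x r) :=
    ⟨by simp, mem_ball_self hr⟩
  have hfin : Metric.hausdorffEDist (frontier Ω ∩ ball x r)
        ({y | ⟪y - x, ν⟫ = 0} ∩ ball x r) ≠ ⊤ :=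
    Metric.hausdorffEDist_ne_top_of_nonempty_of_bounded ⟨x, hx, mem_ball_self hr⟩ ⟨x, hxH⟩
      (isBounded_ball.subset inter_subset_right) (isBounded_ball.subset inter_subset_right)
  have hpc : IsPreconnected (ball (x + ((1/8 + η) * r) • ν) (r/8)) :=
    (convex_ball _ _).isPreconnected
  have hne : (ball (x + ((1/8 + η) * r) • ν) (r/8) ∩ Ω).Nonempty := by
    have hmem : x + ((1/8 + 3/2 * η) * r) • ν ∈ ball (x + ((1/8 + η) * r) • ν) (r/8) := by
      have e : x + ((1/8 + 3/2 * η) * r) • ν - (x + ((1/8 + η) * r) • ν)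
          = (η * r / 2) • ν := by module
      rw [mem_ball, dist_eq_norm, e, norm_smul, hν, mul_one,
        Real.norm_of_nonneg (by positivity)]
      linarith
    refine ⟨_, hmem, hin ⟨(hB _ hmem).1, ?_⟩⟩
    rw [add_sub_cancel_left, real_inner_smul_left, hνν]
    linarith
  refine hpc.subset_of_closure_inter_subset hΩo hne ?_
  rintro p ⟨hpc, hpB⟩
  by_contra hpn
  have hp : p ∈ frontier Ω := by
    rw [hΩo.frontier_eq]
    exact ⟨hpc, hpn⟩
  obtain ⟨hpx, hpν⟩ := hB p hpB
  have h1 := Metric.infDist_le_hausdorffDist_of_mem (mem_inter hp hpx) hfin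
  have h2 : ⟪p - x, ν⟫ ≤ infDist p ({y | ⟪y - x, ν⟫ = 0} ∩ ball x r) := by
    rw [Metric.le_infDist ⟨x, hxH⟩]
    rintro y ⟨hy, -⟩
    have hy' : ⟪y - x, ν⟫ = 0 := hy
    have e : p - x = (p - y) + (y - x) := by abel
    rw [e, inner_add_left, hy', dist_eq_norm]
    have := real_inner_le_norm (p - y) ν
    rw [hν] at this
    linarith
  linarith
end
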